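/- arXiv:2404.10350 — 9 statements merged into one kernel-verified Lean document; each statement's English description precedes it below -/
import Mathlib

section
/- Let u_ρ ∈ X satisfy the regularized variational equation with data ū = ι w, where w ∈ X is such that there exists f ∈ H with ⟨w, v⟩_X = ⟨f, ι v⟩_H for all v ∈ X (i.e. D w = f ∈ L²(Q) in the paper's notation). Then ‖ι u_ρ − ū‖_H ≤ ρ ‖f‖_H. -/
open RealInnerProductSpace

/-- Let `u_ρ ∈ X` satisfy the regularized variational equation with data
`ū = ι w`, where `w ∈ X` is such that there exists `f ∈ H` with
`⟨w, v⟩_X = ⟨f, ι v⟩_H` for all `v ∈ X`. Then `‖ι u_ρ − ū‖_H ≤ ρ ‖f‖_H`. -/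
theorem stmt_3
    {X H : Type*} [NormedAddCommGroup X] [InnerProductSpace ℝ X] [CompleteSpace X]
    [NormedAddCommGroup H] [InnerProductSpace ℝ H] [CompleteSpace H]
    (ι : X →L[ℝ] H) (ρ : ℝ) (hρ : 0 < ρ) (w : X) (f : H)
    (hw : ∀ v : X, ⟪w, v⟫ = ⟪f, ι v⟫)
    (ubar : H) (hubar : ubar = ι w) (uρ : X)
    (heq : ∀ v : X, ⟪ι uρ, ι v⟫ + ρ * ⟪uρ, v⟫ = ⟪ubar, ι v⟫) :
    ‖ι uρ - ubar‖ ≤ ρ * ‖f‖ := by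
  subst hubar
  have h1 := heq (uρ - w)
  have h2 := hw (uρ - w)
  rw [← map_sub]
  set e := uρ - w with he
  have hu : uρ = e + w := by rw [he]; abel
  rw [hu, map_add, inner_add_left, inner_add_left, h2, real_inner_self_eq_norm_sq,
    real_inner_self_eq_norm_sq] at h1
  have h3 := (abs_le.mp (abs_real_inner_le_norm f (ι e))).1
  have h4 : ‖ι e‖ * ‖ι e‖ ≤ (ρ * ‖f‖) * ‖ι e‖ := by
    nlinarith [mul_nonneg hρ.le (sq_nonneg ‖e‖), mul_le_mul_of_nonneg_left h3 hρ.le]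
  rcases (norm_nonneg (ι e)).eq_or_lt with h | h
  · rw [← h]; positivity
  · exact le_of_mul_le_mul_right h4 h
end

section
/- Let u_ρ ∈ X satisfy the regularized variational equation with data ū = ι w, where w ∈ X is such that there exists f ∈ H with ⟨w, v⟩_X = ⟨f, ι v⟩_H for all v ∈ X. Then ‖u_ρ − w‖_X ≤ ρ^{1/2} ‖f‖_H. -/
open RealInnerProductSpace

/-- Let `u_ρ ∈ X` satisfy the regularized variational equation with data
`ū = ι w`, where `w ∈ X` is such that there exists `f ∈ H` with
`⟨w, v⟩_X = ⟨f, ι v⟩_H` for all `v ∈ X`. Then `‖u_ρ − w‖_X ≤ ρ^(1/2) ‖f‖_H`. -/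
theorem stmt_4
    {X H : Type*} [NormedAddCommGroup X] [InnerProductSpace ℝ X] [CompleteSpace X]
    [NormedAddCommGroup H] [InnerProductSpace ℝ H] [CompleteSpace H]
    (ι : X →L[ℝ] H) (ρ : ℝ) (hρ : 0 < ρ) (w : X) (f : H)
    (hw : ∀ v : X, ⟪w, v⟫ = ⟪f, ι v⟫)
    (ubar : H) (hubar : ubar = ι w) (uρ : X)
    (heq : ∀ v : X, ⟪ι uρ, ι v⟫ + ρ * ⟪uρ, v⟫ = ⟪ubar, ι v⟫) :
    ‖uρ - w‖ ≤ Real.sqrt ρ * ‖f‖ := by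
  have h1 := heq (uρ - w)
  have h2 := hw (uρ - w)
  have e1 : ⟪ι (uρ - w), ι (uρ - w)⟫ = ⟪ι uρ, ι (uρ - w)⟫ - ⟪ι w, ι (uρ - w)⟫ := by
    rw [← inner_sub_left, ← map_sub]
  have e2 : ⟪uρ - w, uρ - w⟫ = ⟪uρ, uρ - w⟫ - ⟪w, uρ - w⟫ := inner_sub_left _ _ _
  rw [real_inner_self_eq_norm_sq] at e1 e2
  rw [hubar] at h1
  have h3 : -⟪f, ι (uρ - w)⟫ ≤ ‖f‖ * ‖ι (uρ - w)‖ :=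
    (neg_le_abs _).trans (abs_real_inner_le_norm _ _)
  have key : ‖ι (uρ - w)‖ ^ 2 + ρ * ‖uρ - w‖ ^ 2 ≤ ρ * (‖f‖ * ‖ι (uρ - w)‖) := by
    have h4 : ‖ι (uρ - w)‖ ^ 2 + ρ * ‖uρ - w‖ ^ 2 = ρ * (-⟪f, ι (uρ - w)⟫) := by
      rw [e1, e2, ← h2]
      linarith
    rw [h4]
    exact mul_le_mul_of_nonneg_left h3 hρ.le
  have h5 : ρ * ‖uρ - w‖ ^ 2 ≤ ρ * (ρ * ‖f‖ ^ 2) := by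
    nlinarith [sq_nonneg (ρ * ‖f‖ - 2 * ‖ι (uρ - w)‖), sq_nonneg (ρ * ‖f‖)]
  have h6 := le_of_mul_le_mul_left h5 hρ
  refine (le_abs_self _).trans (abs_le_of_sq_le_sq ?_ (by positivity))
  rw [mul_pow, Real.sq_sqrt hρ.le]
  exact h6
end

section
/- Quasi-optimal discretization error bound: let X_h ⊆ X be a closed subspace, let u_ρ ∈ X satisfy the regularized variational equation against all v ∈ X with data ū = ι w, where w ∈ X admits f ∈ H with ⟨w, v⟩_X = ⟨f, ι v⟩_H for all v ∈ X, and let u_{ρ,h} ∈ X_h satisfy the equation against all v_h ∈ X_h. Then for every v_h ∈ X_h, ‖ι u_{ρ,h} − ū‖_H² ≤ 10 ρ² ‖f‖_H² + 4 ( ‖ι(w − v_h)‖_H² + ρ ‖w − v_h‖_X² ). -/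
open RealInnerProductSpace

/-- quasi-optimal discretization error bound: let `X_h ⊆ X` be a closed
subspace, let `u_ρ ∈ X` satisfy the regularized variational equation against all `v ∈ X`
with data `ū = ι w`, where `w ∈ X` admits `f ∈ H` with `⟨w, v⟩_X = ⟨f, ι v⟩_H` for all
`v ∈ X`, and let `u_{ρ,h} ∈ X_h` satisfy the equation against all `v_h ∈ X_h`. Then for
every `v_h ∈ X_h`,
`‖ι u_{ρ,h} − ū‖_H² ≤ 10 ρ² ‖f‖_H² + 4 (‖ι(w − v_h)‖_H² + ρ ‖w − v_h‖_X²)`. -/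
theorem stmt_8
    {X H : Type*} [NormedAddCommGroup X] [InnerProductSpace ℝ X] [CompleteSpace X]
    [NormedAddCommGroup H] [InnerProductSpace ℝ H] [CompleteSpace H]
    (ι : X →L[ℝ] H) (ρ : ℝ) (hρ : 0 < ρ)
    (w : X) (f : H) (hw : ∀ v : X, ⟪w, v⟫ = ⟪f, ι v⟫)
    (ubar : H) (hubar : ubar = ι w)
    (Xh : Submodule ℝ X) (hXh : IsClosed (Xh : Set X))
    (uρ : X) (heq : ∀ v : X, ⟪ι uρ, ι v⟫ + ρ * ⟪uρ, v⟫ = ⟪ubar, ι v⟫)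
    (uρh : X) (huρh : uρh ∈ Xh)
    (heqh : ∀ vh ∈ Xh, ⟪ι uρh, ι vh⟫ + ρ * ⟪uρh, vh⟫ = ⟪ubar, ι vh⟫) :
    ∀ vh ∈ Xh,
      ‖ι uρh - ubar‖ ^ 2 ≤
        10 * ρ ^ 2 * ‖f‖ ^ 2 + 4 * (‖ι (w - vh)‖ ^ 2 + ρ * ‖w - vh‖ ^ 2) := by
  intro vh hvh
  subst hubar
  obtain ⟨e, he⟩ : ∃ e, e = uρh - w := ⟨_, rfl⟩
  obtain ⟨d, hd⟩ : ∃ d, d = w - vh := ⟨_, rfl⟩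
  have hv : e + d ∈ Xh := by
    have h := Xh.sub_mem huρh hvh
    rw [he, hd]
    simpa using h
  have h1 := heqh _ hv
  have hu : uρh = e + w := by rw [he]; abel
  have hf := hw (e + d)
  rw [← hd, ← map_sub, ← he]
  rw [hu] at h1
  simp only [map_add, inner_add_left, inner_add_right] at h1 hf
  rw [real_inner_self_eq_norm_sq, real_inner_self_eq_norm_sq] at h1
  have k1 : 0 ≤ ‖(1 / 2 : ℝ) • ι e + ι d‖ ^ 2 := sq_nonneg _
  have k2 : 0 ≤ ‖(1 / 2 : ℝ) • ι e + ρ • f‖ ^ 2 := sq_nonneg _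
  have k3 : 0 ≤ ‖ι d + ρ • f‖ ^ 2 := sq_nonneg _
  have k4 : 0 ≤ ρ * ‖e + (1 / 2 : ℝ) • d‖ ^ 2 := by positivity
  rw [norm_add_sq_real] at k1 k2 k3 k4
  simp only [norm_smul, inner_smul_left, inner_smul_right, mul_pow, Real.norm_eq_abs, sq_abs,
    conj_trivial] at k1 k2 k3 k4
  rw [real_inner_comm f (ι d)] at k3
  rw [real_inner_comm f (ι e)] at k2
  have p1 : 0 ≤ ρ ^ 2 * ‖f‖ ^ 2 := by positivity
  have p2 : 0 ≤ ρ * ‖d‖ ^ 2 := by positivity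
  have p3 : 0 ≤ ‖ι d‖ ^ 2 := by positivity
  have hf' := congrArg (ρ * ·) hf
  simp only [mul_add] at hf' h1 k4
  linarith
end

section
/- For every interior index i with 1 ≤ i ≤ N−1 and every k ∈ ℕ, the Fourier coefficient of the interior hat function satisfies A_k^i = (2/N) · (sin² x_k / x_k²) · sin((π/2 + kπ) i / N). -/
open Real

/-- The piecewise linear hat function `φ_j` on `[0,T]` for a uniform mesh with `N`
elements of size `h = T/N` and nodes `t_i = i h`: for `j = 1,…,N−1` the interior hat
`φ_j(t) = max(0, 1 − |t − t_j|/h)`, and for `j = N` the boundary hat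
`φ_N(t) = max(0, 1 − (t_N − t)/h)`. -/
noncomputable def hatFn (N : ℕ) (T : ℝ) (j : ℕ) (t : ℝ) : ℝ :=
  if j = N then max 0 (1 - ((N : ℝ) * (T / N) - t) / (T / N))
  else max 0 (1 - |t - (j : ℝ) * (T / N)| / (T / N))

/-- The Fourier coefficient `A_k^j = (2/T) ∫_0^T φ_j(t) sin((π/2 + kπ) t / T) dt`. -/
noncomputable def fourierCoef (N : ℕ) (T : ℝ) (k j : ℕ) : ℝ :=
  (2 / T) * ∫ t in (0 : ℝ)..T, hatFn N T j t * Real.sin ((π / 2 + k * π) * t / T)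

theorem aux_lin (α β ω a b : ℝ) (hω : ω ≠ 0) :
    ∫ t in a..b, (α + β * t) * Real.sin (ω * t) =
      (-(α + β * b) * Real.cos (ω * b) / ω + β * Real.sin (ω * b) / ω ^ 2) -
      (-(α + β * a) * Real.cos (ω * a) / ω + β * Real.sin (ω * a) / ω ^ 2) := by
  apply intervalIntegral.integral_eq_sub_of_hasDerivAt
    (f := fun t => -(α + β * t) * Real.cos (ω * t) / ω + β * Real.sin (ω * t) / ω ^ 2)
  · intro x _
    have h0 : HasDerivAt (fun t : ℝ => ω * t) ω x := by
      simpa using (hasDerivAt_id x).const_mul ω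
    have h1 : HasDerivAt (fun t : ℝ => -(α + β * t)) (-β) x := by
      have := (((hasDerivAt_id x).const_mul β).const_add α).neg
      rw [mul_one] at this
      exact this
    have h2 := (((h1.mul h0.cos).div_const ω).add ((h0.sin.const_mul β).div_const (ω ^ 2)))
    refine HasDerivAt.congr_deriv h2 ?_
    field_simp
    ring
  · apply Continuous.intervalIntegrable
    fun_prop

theorem aux_hat (c h ω T : ℝ) (hh : 0 < h) (hω : ω ≠ 0) (h0 : 0 ≤ c - h) (h1 : c + h ≤ T) :
    ∫ t in (0 : ℝ)..T, max 0 (1 - |t - c| / h) * Real.sin (ω * t) =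
      4 * Real.sin (ω * h / 2) ^ 2 * Real.sin (ω * c) / (h * ω ^ 2) := by
  have hc : Continuous (fun t : ℝ => max 0 (1 - |t - c| / h) * Real.sin (ω * t)) := by
    fun_prop
  have hi : ∀ a b : ℝ, IntervalIntegrable
      (fun t : ℝ => max 0 (1 - |t - c| / h) * Real.sin (ω * t)) MeasureTheory.volume a b :=
    fun a b => hc.intervalIntegrable a b
  rw [← intervalIntegral.integral_add_adjacent_intervals (hi 0 (c - h)) (hi (c - h) T),
    ← intervalIntegral.integral_add_adjacent_intervals (hi (c - h) c) (hi c T),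
    ← intervalIntegral.integral_add_adjacent_intervals (hi c (c + h)) (hi (c + h) T)]
  have e1 : ∫ t in (0 : ℝ)..(c - h), max 0 (1 - |t - c| / h) * Real.sin (ω * t) = 0 := by
    rw [intervalIntegral.integral_congr (g := fun _ => (0 : ℝ))]
    · simp
    · intro t ht
      rw [Set.uIcc_of_le h0] at ht
      have : 1 ≤ |t - c| / h := by
        rw [le_div_iff₀ hh, abs_of_nonpos (by linarith [ht.2])]
        linarith [ht.2]
      simp only
      rw [max_eq_left (by linarith), zero_mul]
  have e4 : ∫ t in (c + h)..T, max 0 (1 - |t - c| / h) * Real.sin (ω * t) = 0 := by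
    rw [intervalIntegral.integral_congr (g := fun _ => (0 : ℝ))]
    · simp
    · intro t ht
      rw [Set.uIcc_of_le h1] at ht
      have : 1 ≤ |t - c| / h := by
        rw [le_div_iff₀ hh, abs_of_nonneg (by linarith [ht.1])]
        linarith [ht.1]
      simp only
      rw [max_eq_left (by linarith), zero_mul]
  have e2 : ∫ t in (c - h)..c, max 0 (1 - |t - c| / h) * Real.sin (ω * t) =
      ∫ t in (c - h)..c, ((1 - c / h) + (1 / h) * t) * Real.sin (ω * t) := by
    apply intervalIntegral.integral_congr
    intro t ht
    rw [Set.uIcc_of_le (by linarith)] at ht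
    have : |t - c| / h ≤ 1 := by
      rw [div_le_iff₀ hh, abs_of_nonpos (by linarith [ht.2])]
      linarith [ht.1]
    simp only
    rw [max_eq_right (by linarith), abs_of_nonpos (by linarith [ht.2])]
    ring
  have e3 : ∫ t in c..(c + h), max 0 (1 - |t - c| / h) * Real.sin (ω * t) =
      ∫ t in c..(c + h), ((1 + c / h) + (-1 / h) * t) * Real.sin (ω * t) := by
    apply intervalIntegral.integral_congr
    intro t ht
    rw [Set.uIcc_of_le (by linarith)] at ht
    have : |t - c| / h ≤ 1 := by
      rw [div_le_iff₀ hh, abs_of_nonneg (by linarith [ht.1])]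
      linarith [ht.2]
    simp only
    rw [max_eq_right (by linarith), abs_of_nonneg (by linarith [ht.1])]
    ring
  rw [e1, e2, e3, e4, aux_lin _ _ _ _ _ hω, aux_lin _ _ _ _ _ hω, mul_add ω, mul_sub ω,
    Real.sin_add, Real.sin_sub]
  have hcos : Real.cos (ω * h) = 1 - 2 * Real.sin (ω * h / 2) ^ 2 := by
    have e : ω * h = 2 * (ω * h / 2) := by ring
    have := Real.sin_sq_add_cos_sq (ω * h / 2)
    rw [e, Real.cos_two_mul, ← e]
    linarith
  rw [hcos]
  generalize Real.sin (ω * h / 2) = s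
  have z1 : 1 - c / h + 1 / h * (c - h) = 0 := by field_simp; ring
  have z2 : 1 + c / h + -1 / h * (c + h) = 0 := by field_simp; ring
  rw [z1, z2]
  field_simp
  ring

/-- For every interior index `i` with `1 ≤ i ≤ N−1` and every `k ∈ ℕ`, the
Fourier coefficient of the interior hat function satisfies
`A_k^i = (2/N) · (sin² x_k / x_k²) · sin((π/2 + kπ) i / N)`,
where `x_k = (π/2 + kπ)/(2N)`. -/
theorem stmt_9 (N : ℕ) (hN : 1 ≤ N) (T : ℝ) (hT : 0 < T)
    (i : ℕ) (hi1 : 1 ≤ i) (hi2 : i ≤ N - 1) (k : ℕ) :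
    fourierCoef N T k i =
      (2 / N) * (Real.sin ((π / 2 + k * π) / (2 * N)) ^ 2 / ((π / 2 + k * π) / (2 * N)) ^ 2) *
        Real.sin ((π / 2 + k * π) * i / N) := by
  have hNp : (0 : ℝ) < N := by exact_mod_cast hN
  have hne : i ≠ N := by omega
  have hpos : 0 < π / 2 + k * π := by positivity
  have hi1' : (1 : ℝ) ≤ i := by exact_mod_cast hi1
  have hi2' : (i : ℝ) + 1 ≤ N := by
    have : i + 1 ≤ N := by omega
    exact_mod_cast this
  unfold fourierCoef
  simp only [hatFn, if_neg hne]
  generalize π / 2 + k * π = a at *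
  have hh : 0 < T / N := by positivity
  have hT' : (N : ℝ) * (T / N) = T := by field_simp
  have key := aux_hat (i * (T / N)) (T / N) (a / T) T hh (by positivity)
    (by nlinarith) (by nlinarith)
  have hfun : ∀ t : ℝ, a * t / T = a / T * t := fun t => by ring
  simp only [hfun]
  rw [key]
  have r1 : a / T * (T / N) / 2 = a / (2 * N) := by field_simp
  have r2 : a / T * (i * (T / N)) = a * i / N := by field_simp
  rw [r1, r2]
  field_simp
  try ring
end

section
/- For the boundary hat function and every k ∈ ℕ, the Fourier coefficient satisfies A_k^N = (1/N) · (sin² x_k / x_k²) · sin(π/2 + kπ). -/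
open Real

/-- For the boundary hat function and every `k ∈ ℕ`, the Fourier
coefficient satisfies `A_k^N = (1/N) · (sin² x_k / x_k²) · sin(π/2 + kπ)`,
where `x_k = (π/2 + kπ)/(2N)`. -/
theorem stmt_10 (N : ℕ) (hN : 1 ≤ N) (T : ℝ) (hT : 0 < T) (k : ℕ) :
    fourierCoef N T k N =
      (1 / N) * (Real.sin ((π / 2 + k * π) / (2 * N)) ^ 2 / ((π / 2 + k * π) / (2 * N)) ^ 2) *
        Real.sin (π / 2 + k * π) := by
  have hN0 : (0 : ℝ) < N := by exact_mod_cast hN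
  have hw : 0 < π / 2 + k * π := by positivity
  have hcos : Real.cos (π / 2 + k * π) = 0 := by
    rw [Real.cos_add, Real.cos_pi_div_two, Real.sin_nat_mul_pi]; ring
  unfold fourierCoef
  generalize π / 2 + k * π = w at *
  have hh : 0 < T / N := by positivity
  have hhT : T / N ≤ T := div_le_self hT.le (by exact_mod_cast hN)
  have hcont : Continuous (fun t => hatFn N T N t * Real.sin (w * t / T)) := by
    simp only [hatFn, if_true]
    fun_prop
  rw [← intervalIntegral.integral_add_adjacent_intervals (b := T - T / N)
    (hcont.intervalIntegrable _ _) (hcont.intervalIntegrable _ _)]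
  have hNT : (N : ℝ) * (T / N) = T := by field_simp
  have h1 : ∫ t in (0 : ℝ)..(T - T / N), hatFn N T N t * Real.sin (w * t / T) = 0 := by
    apply intervalIntegral.integral_zero_ae
    refine Filter.Eventually.of_forall fun t ht => ?_
    rw [Set.uIoc_of_le (by linarith)] at ht
    have : 1 ≤ (T - t) / (T / N) := by
      rw [le_div_iff₀ hh]; linarith [ht.2]
    simp only [hatFn, if_true, hNT]
    rw [max_eq_left (by linarith), zero_mul]
  have h2 : ∫ t in (T - T / N)..T, hatFn N T N t * Real.sin (w * t / T) =
      ∫ t in (T - T / N)..T, (1 - (T - t) / (T / N)) * Real.sin (w * t / T) := by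
    apply intervalIntegral.integral_congr
    intro t ht
    rw [Set.uIcc_of_le (by linarith)] at ht
    have : (T - t) / (T / N) ≤ 1 := by
      rw [div_le_one hh]; linarith [ht.1]
    simp only [hatFn, if_true, hNT]
    rw [max_eq_right (by linarith)]
  have h3 : ∫ t in (T - T / N)..T, (1 - (T - t) / (T / N)) * Real.sin (w * t / T) =
      (-(1 - (T - T) / (T / N)) * Real.cos (w * T / T) * (T / w)
        + Real.sin (w * T / T) * (N * T / w ^ 2)) -
      (-(1 - (T - (T - T / N)) / (T / N)) * Real.cos (w * (T - T / N) / T) * (T / w)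
        + Real.sin (w * (T - T / N) / T) * (N * T / w ^ 2)) := by
    apply intervalIntegral.integral_eq_sub_of_hasDerivAt
      (f := fun t => -(1 - (T - t) / (T / N)) * Real.cos (w * t / T) * (T / w)
        + Real.sin (w * t / T) * (N * T / w ^ 2))
    · intro t _
      have ha : HasDerivAt (fun t : ℝ => w * t / T) (w * 1 / T) t :=
        ((hasDerivAt_id t).const_mul w).div_const T
      have hb : HasDerivAt (fun t : ℝ => -(1 - (T - t) / (T / N))) (-(-(-1 / (T / N)))) t :=
        ((((hasDerivAt_id t).const_sub T).div_const (T / N)).const_sub 1).neg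
      refine (((hb.mul ha.cos).mul_const (T / w)).add
        (ha.sin.mul_const (N * T / w ^ 2))).congr_deriv ?_
      field_simp
      ring
    · apply Continuous.intervalIntegrable
      fun_prop
  rw [h1, h2, h3]
  have e1 : w * T / T = w := by field_simp
  have e2 : w * (T - T / N) / T = w - 2 * (w / (2 * N)) := by field_simp
  have e3 : 1 - (T - (T - T / N)) / (T / N) = 0 := by field_simp; ring
  rw [e1, e2, e3, Real.sin_sub, hcos, Real.cos_two_mul, Real.cos_sq']
  generalize Real.sin (w / (2 * N)) = s
  field_simp
  ring
end

section
/- Shift recurrence for the hat-function Fourier coefficients: for every j with 1 ≤ j ≤ N, every k with 0 ≤ k ≤ 2N−1, and every μ ∈ ℕ with μ ≥ 1, one has A_{k+2μN}^j = ((2k+1)² / (4μN + 2k + 1)²) · A_k^j. -/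
open Real

lemma int_lin (w p q a b : ℝ) (hw : w ≠ 0) :
    ∫ t in a..b, (p + q * t) * Real.sin (w * t) =
      (-(p + q * b) * Real.cos (w * b) / w + q * Real.sin (w * b) / w ^ 2)
      - (-(p + q * a) * Real.cos (w * a) / w + q * Real.sin (w * a) / w ^ 2) := by
  have hd : ∀ t ∈ Set.uIcc a b, HasDerivAt
      (fun t => -(p + q * t) * Real.cos (w * t) / w + q * Real.sin (w * t) / w ^ 2)
      ((p + q * t) * Real.sin (w * t)) t := by
    intro t _
    have h1 : HasDerivAt (fun t : ℝ => w * t) w t := by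
      simpa using (hasDerivAt_id t).const_mul w
    have h2 : HasDerivAt (fun t : ℝ => -(p + q * t)) (-q) t := by
      have h0 : HasDerivAt (fun t : ℝ => p + q * t) q t := by
        simpa using ((hasDerivAt_id t).const_mul q).const_add p
      exact h0.neg
    have h3 := ((h2.mul h1.cos).div_const w).add ((h1.sin.const_mul q).div_const (w ^ 2))
    refine h3.congr_deriv ?_
    field_simp
    ring
  exact intervalIntegral.integral_eq_sub_of_hasDerivAt hd
    (Continuous.intervalIntegrable (by fun_prop) _ _)

lemma hat_cont (N : ℕ) (T : ℝ) (j : ℕ) : Continuous (hatFn N T j) := by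
  unfold hatFn
  split_ifs <;> fun_prop

lemma hat_eq (N : ℕ) (h : ℝ) (hN : 1 ≤ N) (j : ℕ) (t : ℝ) :
    hatFn N (N * h) j t = if j = N then max 0 (1 - (N * h - t) / h)
      else max 0 (1 - |t - j * h| / h) := by
  have : (N : ℝ) * h / N = h := by
    have : (N : ℝ) ≠ 0 := by positivity
    field_simp
  simp only [hatFn, this]

lemma int_hat_left (N : ℕ) (h w : ℝ) (hN : 1 ≤ N) (hh : 0 < h) (hw : w ≠ 0) (m : ℕ)
    (hm : m + 1 ≤ N) :
    ∫ t in (0 : ℝ)..((m + 1) * h), hatFn N (N * h) (m + 1) t * Real.sin (w * t) =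
      (Real.sin (w * ((m + 1) * h)) - Real.sin (w * (m * h))) / (h * w ^ 2)
        - Real.cos (w * ((m + 1) * h)) / w := by
  have hI : ∀ a b, IntervalIntegrable
      (fun t => hatFn N (N * h) (m + 1) t * Real.sin (w * t)) MeasureTheory.volume a b :=
    fun a b => ((hat_cont _ _ _).mul (by fun_prop)).intervalIntegrable _ _
  have hform : ∀ t, t ≤ (m + 1) * h →
      hatFn N (N * h) (m + 1) t = max 0 (1 - ((m + 1) * h - t) / h) := by
    intro t ht
    rw [hat_eq N h hN]
    split_ifs with hc
    · rw [← hc]; push_cast; rfl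
    · push_cast
      rw [abs_of_nonpos (by linarith)]
      congr 3; ring
  rw [← intervalIntegral.integral_add_adjacent_intervals (hI 0 (m * h)) (hI (m * h) _)]
  have hm0 : (0 : ℝ) ≤ m * h := by positivity
  have e1 : ∫ t in (0 : ℝ)..(m * h), hatFn N (N * h) (m + 1) t * Real.sin (w * t) = 0 := by
    rw [intervalIntegral.integral_congr (g := fun _ => (0 : ℝ))]
    · simp
    · intro t ht
      rw [Set.uIcc_of_le hm0] at ht
      simp only
      rw [hform t (by linarith [ht.2]), max_eq_left, zero_mul]
      rw [sub_nonpos, le_div_iff₀ hh]; linarith [ht.2]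
  have e2 : ∫ t in (m * h)..((m + 1) * h), hatFn N (N * h) (m + 1) t * Real.sin (w * t) =
      ∫ t in (m * h)..((m + 1) * h), (-(m : ℝ) + (1 / h) * t) * Real.sin (w * t) := by
    apply intervalIntegral.integral_congr
    intro t ht
    rw [Set.uIcc_of_le (by linarith)] at ht
    simp only
    rw [hform t ht.2, max_eq_right]
    · congr 1; field_simp; ring
    · rw [sub_nonneg, div_le_iff₀ hh]; linarith [ht.1]
  rw [e1, e2, int_lin _ _ _ _ _ hw]
  field_simp
  ring

lemma int_hat_right (N : ℕ) (h w : ℝ) (hN : 1 ≤ N) (hh : 0 < h) (hw : w ≠ 0) (m : ℕ)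
    (hm : m + 2 ≤ N) :
    ∫ t in ((m + 1) * h)..(N * h), hatFn N (N * h) (m + 1) t * Real.sin (w * t) =
      (Real.sin (w * ((m + 1) * h)) - Real.sin (w * ((m + 2) * h))) / (h * w ^ 2)
        + Real.cos (w * ((m + 1) * h)) / w := by
  have hI : ∀ a b, IntervalIntegrable
      (fun t => hatFn N (N * h) (m + 1) t * Real.sin (w * t)) MeasureTheory.volume a b :=
    fun a b => ((hat_cont _ _ _).mul (by fun_prop)).intervalIntegrable _ _
  have hform : ∀ t, (m + 1) * h ≤ t →
      hatFn N (N * h) (m + 1) t = max 0 (1 - (t - (m + 1) * h) / h) := by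
    intro t ht
    rw [hat_eq N h hN, if_neg (by omega)]
    push_cast
    rw [abs_of_nonneg (by linarith)]
  rw [← intervalIntegral.integral_add_adjacent_intervals (hI _ ((m + 2) * h))
    (hI ((m + 2) * h) _)]
  have hm0 : ((m : ℝ) + 2) * h ≤ N * h := by
    have : (m : ℝ) + 2 ≤ N := by exact_mod_cast hm
    gcongr
  have e1 : ∫ t in ((m + 2) * h)..(N * h),
      hatFn N (N * h) (m + 1) t * Real.sin (w * t) = 0 := by
    rw [intervalIntegral.integral_congr (g := fun _ => (0 : ℝ))]
    · simp
    · intro t ht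
      rw [Set.uIcc_of_le hm0] at ht
      simp only
      rw [hform t (by linarith [ht.1]), max_eq_left, zero_mul]
      rw [sub_nonpos, le_div_iff₀ hh]; linarith [ht.1]
  have e2 : ∫ t in ((m + 1) * h)..((m + 2) * h),
      hatFn N (N * h) (m + 1) t * Real.sin (w * t) =
      ∫ t in ((m + 1) * h)..((m + 2) * h),
        (((m : ℝ) + 2) + (-1 / h) * t) * Real.sin (w * t) := by
    apply intervalIntegral.integral_congr
    intro t ht
    rw [Set.uIcc_of_le (by linarith)] at ht
    simp only
    rw [hform t ht.1, max_eq_right]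
    · congr 1; field_simp; ring
    · rw [sub_nonneg, div_le_iff₀ hh]; linarith [ht.2]
  rw [e1, e2, int_lin _ _ _ _ _ hw]
  field_simp
  ring

lemma coef_eq (N : ℕ) (h : ℝ) (hN : 1 ≤ N) (hh : 0 < h) (m : ℕ) (hm : m + 1 ≤ N) (k : ℕ)
    (w : ℝ) (hw : w = (π / 2 + k * π) / (N * h)) :
    fourierCoef N (N * h) k (m + 1) = (2 / (N * h)) * ((1 / (h * w ^ 2)) *
      (if m + 1 = N then Real.sin (w * ((m + 1 : ℕ) * h)) - Real.sin (w * (m * h))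
       else 2 * Real.sin (w * ((m + 1 : ℕ) * h)) - Real.sin (w * (m * h))
        - Real.sin (w * ((m + 2 : ℕ) * h)))) := by
  have hN0 : (0 : ℝ) < N := by exact_mod_cast hN
  have hw0 : w ≠ 0 := by
    rw [hw]; positivity
  unfold fourierCoef
  congr 1
  have e : ∀ t : ℝ, (π / 2 + k * π) * t / (N * h) = w * t := by
    intro t; rw [hw]; ring
  simp only [e]
  have hl := int_hat_left N h w hN hh hw0 m hm
  split_ifs with hc
  · have hc' : (N : ℝ) = m + 1 := by rw [← hc]; push_cast; rfl
    have hcos : Real.cos (w * ((m + 1) * h)) = 0 := by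
      rw [← hc', hw, div_mul_cancel₀ _ (by positivity), add_comm, Real.cos_add_pi_div_two,
        Real.sin_nat_mul_pi, neg_zero]
    rw [hcos, ← hc'] at hl
    rw [hl]
    push_cast
    rw [← hc']
    ring
  · have hI : ∀ a b, IntervalIntegrable
        (fun t => hatFn N (N * h) (m + 1) t * Real.sin (w * t)) MeasureTheory.volume a b :=
      fun a b => ((hat_cont _ _ _).mul (by fun_prop)).intervalIntegrable _ _
    rw [← intervalIntegral.integral_add_adjacent_intervals (hI _ ((m + 1) * h)) (hI _ _), hl,
      int_hat_right N h w hN hh hw0 m (by omega)]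
    push_cast
    ring

/-- shift recurrence for the hat-function Fourier coefficients: for every
`j` with `1 ≤ j ≤ N`, every `k` with `0 ≤ k ≤ 2N−1`, and every `μ ∈ ℕ` with `μ ≥ 1`,
one has `A_{k+2μN}^j = ((2k+1)² / (4μN + 2k + 1)²) · A_k^j`. -/
theorem stmt_11 (N : ℕ) (hN : 1 ≤ N) (T : ℝ) (hT : 0 < T)
    (j : ℕ) (hj1 : 1 ≤ j) (hj2 : j ≤ N)
    (k : ℕ) (hk : k ≤ 2 * N - 1) (μ : ℕ) (hμ : 1 ≤ μ) :
    fourierCoef N T (k + 2 * μ * N) j =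
      ((2 * k + 1 : ℝ) ^ 2 / (4 * μ * N + 2 * k + 1 : ℝ) ^ 2) * fourierCoef N T k j := by
  have hN0 : (0 : ℝ) < N := by exact_mod_cast hN
  obtain ⟨h, hh, rfl⟩ : ∃ h : ℝ, 0 < h ∧ T = N * h :=
    ⟨T / N, by positivity, by field_simp⟩
  obtain ⟨m, rfl⟩ : ∃ m, j = m + 1 := ⟨j - 1, by omega⟩
  rw [coef_eq N h hN hh m hj2 k _ rfl, coef_eq N h hN hh m hj2 (k + 2 * μ * N) _ rfl]
  have hs : ∀ i : ℕ, Real.sin ((π / 2 + (k + 2 * μ * N : ℕ) * π) / (N * h) * (i * h)) =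
      Real.sin ((π / 2 + k * π) / (N * h) * (i * h)) := by
    intro i
    rw [← Real.sin_add_nat_mul_two_pi ((π / 2 + k * π) / (N * h) * (i * h)) (μ * i)]
    congr 1
    push_cast
    field_simp
    ring
  rw [hs, hs, hs]
  generalize (if m + 1 = N then _ else _ : ℝ) = S
  have h1 : (π / 2 + (k + 2 * μ * N : ℕ) * π) / (N * h)
      = (4 * μ * N + 2 * k + 1) * (π / (2 * N * h)) := by
    push_cast; field_simp; ring
  have h2 : (π / 2 + k * π) / (N * h) = (2 * k + 1) * (π / (2 * N * h)) := by
    field_simp; ring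
  rw [h1, h2]
  have : (4 * μ * N + 2 * k + 1 : ℝ) ≠ 0 := by positivity
  have : (2 * k + 1 : ℝ) ≠ 0 := by positivity
  have : π ≠ 0 := Real.pi_ne_zero
  field_simp
end

section
/- Reflection identity for the hat-function Fourier coefficients: for every j with 1 ≤ j ≤ N and every k with 0 ≤ k ≤ N−1, one has A_{2N−1−k}^j = − ((2k+1)² / (4N − 1 − 2k)²) · A_k^j. -/
open Real

lemma aux_int (p q w a b : ℝ) (hw : w ≠ 0) :
    ∫ t in a..b, (p * t + q) * Real.sin (w * t) =
      (-(p * b + q) * Real.cos (w * b) / w + p * Real.sin (w * b) / w ^ 2) -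
      (-(p * a + q) * Real.cos (w * a) / w + p * Real.sin (w * a) / w ^ 2) := by
  have hd : ∀ t ∈ Set.uIcc a b, HasDerivAt
      (fun t => -(p * t + q) * Real.cos (w * t) / w + p * Real.sin (w * t) / w ^ 2)
      ((p * t + q) * Real.sin (w * t)) t := by
    intro t _
    have h1 : HasDerivAt (fun t : ℝ => w * t) w t := by
      simpa using (hasDerivAt_id t).const_mul w
    have h2 : HasDerivAt (fun t : ℝ => -(p * t + q)) (-p) t := by
      have := (((hasDerivAt_id t).const_mul p).add_const q).neg
      rw [mul_one] at this
      exact this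
    have h3 := ((h2.mul h1.cos).div_const w).add ((h1.sin.const_mul p).div_const (w ^ 2))
    refine h3.congr_deriv ?_
    field_simp
    ring
  rw [intervalIntegral.integral_eq_sub_of_hasDerivAt hd]
  exact Continuous.intervalIntegrable (by fun_prop) _ _

lemma hat_integral_zero (f : ℝ → ℝ) (w a b : ℝ) (hab : a ≤ b)
    (hf : ∀ t ∈ Set.Icc a b, f t = 0) :
    ∫ t in a..b, f t * Real.sin (w * t) = 0 := by
  rw [intervalIntegral.integral_congr (g := fun _ => (0 : ℝ))]
  · simp
  · intro t ht
    rw [Set.uIcc_of_le hab] at ht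
    simp [hf t ht]

lemma hat_integral_lin (f : ℝ → ℝ) (p q w a b : ℝ) (hw : w ≠ 0) (hab : a ≤ b)
    (hf : ∀ t ∈ Set.Icc a b, f t = p * t + q) :
    ∫ t in a..b, f t * Real.sin (w * t) =
      (-(p * b + q) * Real.cos (w * b) / w + p * Real.sin (w * b) / w ^ 2) -
      (-(p * a + q) * Real.cos (w * a) / w + p * Real.sin (w * a) / w ^ 2) := by
  rw [← aux_int p q w a b hw]
  apply intervalIntegral.integral_congr
  intro t ht
  rw [Set.uIcc_of_le hab] at ht
  simp [hf t ht]

/-- Closed form, interior hat. -/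
lemma hat_interior (N m : ℕ) (T h w : ℝ) (hh : 0 < h) (hTh : T / N = h) (hT : T = N * h)
    (hm : m + 2 ≤ N) (hw : w ≠ 0) :
    ∫ t in (0:ℝ)..T, hatFn N T (m + 1) t * Real.sin (w * t) =
      (2 * Real.sin (w * ((m + 1 : ℕ) * h)) - Real.sin (w * (m * h))
        - Real.sin (w * ((m + 2 : ℕ) * h))) / (h * w ^ 2) := by
  have hne : m + 1 ≠ N := by omega
  have hc : Continuous fun t => hatFn N T (m + 1) t * Real.sin (w * t) :=
    (hat_cont N T (m + 1)).mul (by fun_prop)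
  have hi : ∀ a b, IntervalIntegrable (fun t => hatFn N T (m + 1) t * Real.sin (w * t))
      MeasureTheory.volume a b := fun a b => hc.intervalIntegrable a b
  have hmN : ((m : ℝ) + 2) ≤ N := by exact_mod_cast hm
  have hm0 : (0 : ℝ) ≤ m * h := by positivity
  have hval : ∀ t, hatFn N T (m + 1) t = max 0 (1 - |t - (m + 1) * h| / h) := by
    intro t; simp [hatFn, hne, hTh]
  rw [← intervalIntegral.integral_add_adjacent_intervals (hi 0 (m * h)) (hi _ T),
    ← intervalIntegral.integral_add_adjacent_intervals (hi (m * h) ((m + 1) * h)) (hi _ T),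
    ← intervalIntegral.integral_add_adjacent_intervals (hi ((m + 1) * h) ((m + 2) * h)) (hi _ T),
    hat_integral_zero _ w 0 (m * h) hm0,
    hat_integral_lin _ (1 / h) (-m) w (m * h) ((m + 1) * h) hw (by nlinarith),
    hat_integral_lin _ (-1 / h) (m + 2) w ((m + 1) * h) ((m + 2) * h) hw (by nlinarith),
    hat_integral_zero _ w ((m + 2) * h) T (by rw [hT]; nlinarith)]
  · push_cast
    field_simp
    ring
  · rintro t ⟨h1, h2⟩
    rw [hval, max_eq_left]
    rw [sub_nonpos, le_div_iff₀ hh, abs_of_nonneg (by nlinarith)]; linarith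
  · rintro t ⟨h1, h2⟩
    rw [hval, abs_of_nonneg (by linarith), max_eq_right]
    · field_simp; ring
    · rw [sub_nonneg, div_le_iff₀ hh]; linarith
  · rintro t ⟨h1, h2⟩
    rw [hval, abs_of_nonpos (by linarith), max_eq_right]
    · field_simp; ring
    · rw [sub_nonneg, div_le_iff₀ hh]; linarith
  · rintro t ⟨h1, h2⟩
    rw [hval, max_eq_left]
    rw [sub_nonpos, le_div_iff₀ hh, abs_of_nonpos (by nlinarith)]; linarith

/-- Closed form, boundary hat. -/
lemma hat_boundary (N m : ℕ) (T h w : ℝ) (hh : 0 < h) (hTh : T / N = h) (hT : T = N * h)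
    (hm : m + 1 = N) (hw : w ≠ 0) (hcos : Real.cos (w * T) = 0) :
    ∫ t in (0:ℝ)..T, hatFn N T (m + 1) t * Real.sin (w * t) =
      (Real.sin (w * ((m + 1 : ℕ) * h)) - Real.sin (w * (m * h))) / (h * w ^ 2) := by
  have hc : Continuous fun t => hatFn N T (m + 1) t * Real.sin (w * t) :=
    (hat_cont N T (m + 1)).mul (by fun_prop)
  have hi : ∀ a b, IntervalIntegrable (fun t => hatFn N T (m + 1) t * Real.sin (w * t))
      MeasureTheory.volume a b := fun a b => hc.intervalIntegrable a b
  have hmN : (N : ℝ) = m + 1 := by rw [← hm]; push_cast; ring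
  have hm0 : (0 : ℝ) ≤ m * h := by positivity
  have hval : ∀ t, hatFn N T (m + 1) t = max 0 (1 - ((m + 1) * h - t) / h) := by
    intro t
    unfold hatFn
    rw [if_pos hm, hTh, hmN]
  have hT' : T = (m + 1) * h := by rw [hT, hmN]
  rw [← intervalIntegral.integral_add_adjacent_intervals (hi 0 (m * h)) (hi _ T),
    hat_integral_zero _ w 0 (m * h) hm0,
    hat_integral_lin _ (1 / h) (-m) w (m * h) T hw (by rw [hT']; nlinarith), hcos]
  · rw [hT']
    push_cast
    field_simp
    ring
  · rintro t ⟨h1, h2⟩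
    rw [hT'] at h2
    rw [hval, max_eq_right]
    · field_simp; ring
    · rw [sub_nonneg, div_le_iff₀ hh]; linarith
  · rintro t ⟨h1, h2⟩
    rw [hval, max_eq_left]
    rw [sub_nonpos, le_div_iff₀ hh]; linarith

/-- reflection identity for the hat-function Fourier coefficients: for
every `j` with `1 ≤ j ≤ N` and every `k` with `0 ≤ k ≤ N−1`, one has
`A_{2N−1−k}^j = − ((2k+1)² / (4N − 1 − 2k)²) · A_k^j`. -/
theorem stmt_12 (N : ℕ) (hN : 1 ≤ N) (T : ℝ) (hT : 0 < T)
    (j : ℕ) (hj1 : 1 ≤ j) (hj2 : j ≤ N)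
    (k : ℕ) (hk : k ≤ N - 1) :
    fourierCoef N T (2 * N - 1 - k) j =
      -((2 * k + 1 : ℝ) ^ 2 / ((4 * N : ℝ) - 1 - 2 * k) ^ 2) * fourierCoef N T k j := by
  obtain ⟨m, rfl⟩ : ∃ m, j = m + 1 := ⟨j - 1, by omega⟩
  have hN0 : (0 : ℝ) < N := by exact_mod_cast hN
  have hkN : (k : ℝ) + 1 ≤ N := by exact_mod_cast (by omega : k + 1 ≤ N)
  have hk0 : (0 : ℝ) ≤ k := by positivity
  obtain ⟨l, hl⟩ : ∃ l, l = 2 * N - 1 - k := ⟨_, rfl⟩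
  rw [← hl]
  have hlR : (l : ℝ) = 2 * N - 1 - k := by
    have : l + 1 + k = 2 * N := by omega
    have : (l : ℝ) + 1 + k = 2 * N := by exact_mod_cast this
    linarith
  obtain ⟨h, hTh⟩ : ∃ h, T / N = h := ⟨_, rfl⟩
  have hh : 0 < h := by rw [← hTh]; positivity
  have hTN : T = N * h := by rw [← hTh]; field_simp
  have hpi := Real.pi_pos
  have hcos : ∀ n : ℕ, Real.cos ((π / 2 + n * π) / T * T) = 0 := by
    intro n
    rw [div_mul_cancel₀ _ hT.ne', Real.cos_add_nat_mul_pi]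
    simp
  have hwpos : ∀ n : ℕ, (π / 2 + n * π) / T ≠ 0 := fun n => by positivity
  have hsin : ∀ i : ℕ, Real.sin ((π / 2 + l * π) / T * (i * h)) =
      - Real.sin ((π / 2 + k * π) / T * (i * h)) := by
    intro i
    rw [← Real.sin_nat_mul_two_pi_sub _ i]
    congr 1
    rw [hlR, hTN]
    field_simp
    ring
  have hform : ∀ n : ℕ, fourierCoef N T n (m + 1) = (2 / T) *
      ∫ t in (0 : ℝ)..T, hatFn N T (m + 1) t * Real.sin ((π / 2 + n * π) / T * t) := by
    intro n
    unfold fourierCoef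
    congr 2
    ext t
    congr 2
    ring
  have hd1 : (4 * N : ℝ) - 1 - 2 * k ≠ 0 := by nlinarith
  have hd2 : (2 * k + 1 : ℝ) ≠ 0 := by positivity
  have e1 : (π / 2 + l * π) / T = π * (4 * N - 1 - 2 * k) / (2 * T) := by
    rw [hlR]; field_simp; ring
  have e2 : (π / 2 + k * π) / T = π * (2 * k + 1) / (2 * T) := by
    field_simp; ring
  have key : ∀ S : ℝ, 2 / T * (-S / (h * ((π / 2 + l * π) / T) ^ 2)) =
      -((2 * k + 1 : ℝ) ^ 2 / ((4 * N : ℝ) - 1 - 2 * k) ^ 2) *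
        (2 / T * (S / (h * ((π / 2 + k * π) / T) ^ 2))) := by
    intro S
    rw [e1, e2]
    field_simp
  rw [hform, hform]
  rcases Nat.lt_or_ge (m + 1) N with hlt | hge
  · rw [hat_interior N m T h _ hh hTh hTN hlt (hwpos l),
      hat_interior N m T h _ hh hTh hTN hlt (hwpos k), ← key, hsin, hsin, hsin]
    congr 2
    ring
  · have hm : m + 1 = N := by omega
    rw [hat_boundary N m T h _ hh hTh hTN hm (hwpos l) (hcos l),
      hat_boundary N m T h _ hh hTh hTN hm (hwpos k) (hcos k), ← key, hsin, hsin]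
    congr 2
    ring
end

section
/- Action of the lumped-boundary temporal mass matrix on discrete sine vectors: let M ∈ ℝ^{N×N} be the tridiagonal matrix with M[j,j] = 2h/3 for 1 ≤ j ≤ N−1, M[N,N] = h/3, M[j,j+1] = M[j+1,j] = h/6, and all other entries zero. For 0 ≤ ℓ ≤ N−1 let v_ℓ ∈ ℝ^N have components v_{ℓ,i} = sin((π/2 + ℓπ) i / N). Then (M v_ℓ)_j = (h/3)(2 + cos 2x_ℓ) v_{ℓ,j} for 1 ≤ j ≤ N−1, and (M v_ℓ)_N = (h/6)(2 + cos 2x_ℓ) v_{ℓ,N}, where x_ℓ = (π/2 + ℓπ)/(2N). -/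
open Real

/-- The tridiagonal temporal mass matrix with lumped boundary entry, indexed by
`Fin N` (where the index `j : Fin N` represents the node `j+1 ∈ {1,…,N}`):
`M[j,j] = 2h/3` for `1 ≤ j ≤ N−1`, `M[N,N] = h/3`, `M[j,j+1] = M[j+1,j] = h/6`,
all other entries zero. -/
noncomputable def massMat (N : ℕ) (h : ℝ) : Matrix (Fin N) (Fin N) ℝ :=
  fun j i =>
    if j = i then (if (j : ℕ) + 1 = N then h / 3 else 2 * h / 3)
    else if (j : ℕ) + 1 = (i : ℕ) ∨ (i : ℕ) + 1 = (j : ℕ) then h / 6 else 0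

/-- The discrete sine vector `v_ℓ ∈ ℝ^N` with components
`v_{ℓ,i} = sin((π/2 + ℓπ) i / N)` for `i = 1,…,N` (index `i : Fin N` is the node `i+1`). -/
noncomputable def sineVec (N : ℕ) (l : ℕ) : Fin N → ℝ :=
  fun i => Real.sin ((π / 2 + l * π) * ((i : ℕ) + 1) / N)

lemma massMat_sum (N : ℕ) (h : ℝ) (g : ℕ → ℝ) (g0 : g 0 = 0) (j : Fin N) :
    (∑ i : Fin N, massMat N h j i * g ((i : ℕ) + 1)) =
      (if (j : ℕ) + 1 = N then h / 3 else 2 * h / 3) * g ((j : ℕ) + 1)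
      + (if (j : ℕ) + 1 < N then h / 6 * g ((j : ℕ) + 2) else 0) + h / 6 * g (j : ℕ) := by
  have key : ∀ i : Fin N, massMat N h j i * g ((i : ℕ) + 1) =
      (fun k : ℕ => (if (j : ℕ) = k then
        (if (j : ℕ) + 1 = N then h / 3 else 2 * h / 3) * g ((j : ℕ) + 1) else 0)
      + (if (j : ℕ) + 1 = k then h / 6 * g ((j : ℕ) + 2) else 0)
      + (if k + 1 = (j : ℕ) then h / 6 * g (j : ℕ) else 0)) (i : ℕ) := by
    intro i
    simp only [massMat, Fin.ext_iff]
    by_cases h1 : (j : ℕ) = i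
    · have h2 : ¬ ((j : ℕ) + 1 = i) := by omega
      have h3 : ¬ ((i : ℕ) + 1 = j) := by omega
      rw [if_pos h1, if_pos h1, if_neg h2, if_neg h3, h1]
      ring
    · by_cases h2 : (j : ℕ) + 1 = i
      · have h3 : ¬ ((i : ℕ) + 1 = j) := by omega
        rw [if_neg h1, if_neg h1, if_pos h2, if_neg h3, if_pos (Or.inl h2), ← h2]
        ring
      · by_cases h3 : (i : ℕ) + 1 = j
        · rw [if_neg h1, if_neg h1, if_neg h2, if_pos h3, if_pos (Or.inr h3), ← h3]
          ring
        · rw [if_neg h1, if_neg h1, if_neg h2, if_neg h3, if_neg (by tauto)]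
          ring
  have hj := j.2
  rw [Finset.sum_congr rfl (fun i _ => key i)]
  refine (Fin.sum_univ_eq_sum_range (fun k : ℕ => (if (j : ℕ) = k then
        (if (j : ℕ) + 1 = N then h / 3 else 2 * h / 3) * g ((j : ℕ) + 1) else 0)
      + (if (j : ℕ) + 1 = k then h / 6 * g ((j : ℕ) + 2) else 0)
      + (if k + 1 = (j : ℕ) then h / 6 * g (j : ℕ) else 0)) N).trans ?_
  rw [Finset.sum_add_distrib, Finset.sum_add_distrib, Finset.sum_ite_eq, Finset.sum_ite_eq]
  simp only [Finset.mem_range, if_pos hj]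
  congr 1
  generalize (j : ℕ) = m at *
  cases m with
  | zero => simp [g0]
  | succ m =>
    simp only [Nat.add_right_cancel_iff]
    rw [Finset.sum_ite_eq', if_pos (Finset.mem_range.2 (by omega))]

/-- action of the lumped-boundary temporal mass matrix on discrete sine
vectors: for `0 ≤ ℓ ≤ N−1`, `(M v_ℓ)_j = (h/3)(2 + cos 2x_ℓ) v_{ℓ,j}` for
`1 ≤ j ≤ N−1`, and `(M v_ℓ)_N = (h/6)(2 + cos 2x_ℓ) v_{ℓ,N}`, where
`x_ℓ = (π/2 + ℓπ)/(2N)`. -/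
theorem stmt_15 (N : ℕ) (hN : 1 ≤ N) (h : ℝ) (hh : 0 < h) (l : ℕ) (hl : l ≤ N - 1) :
    (∀ j : Fin N, (j : ℕ) + 1 < N →
        (massMat N h).mulVec (sineVec N l) j =
          (h / 3) * (2 + Real.cos (2 * ((π / 2 + l * π) / (2 * N)))) * sineVec N l j) ∧
      (∀ j : Fin N, (j : ℕ) + 1 = N →
        (massMat N h).mulVec (sineVec N l) j =
          (h / 6) * (2 + Real.cos (2 * ((π / 2 + l * π) / (2 * N)))) * sineVec N l j) := by
  have hN' : (N : ℝ) ≠ 0 := by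
    have : N ≠ 0 := by omega
    exact_mod_cast this
  obtain ⟨θ, hθ⟩ : ∃ θ : ℝ, θ = (π / 2 + l * π) / N := ⟨_, rfl⟩
  have hc : 2 * ((π / 2 + l * π) / (2 * N)) = θ := by
    rw [hθ]; field_simp
  have hv : ∀ i : Fin N, sineVec N l i = (fun k : ℕ => Real.sin (k * θ)) ((i : ℕ) + 1) := by
    intro i
    simp only [sineVec, hθ]
    congr 1
    push_cast
    ring
  have hsum : ∀ j : Fin N, (massMat N h).mulVec (sineVec N l) j = _ := fun j => by
    simp only [Matrix.mulVec, dotProduct, hv]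
    exact massMat_sum N h (fun k : ℕ => Real.sin (k * θ)) (by simp) j
  have e0 : ∀ m : ℕ, Real.sin (m * θ) =
      Real.sin (((m + 1 : ℕ) : ℝ) * θ) * Real.cos θ
        - Real.cos (((m + 1 : ℕ) : ℝ) * θ) * Real.sin θ := by
    intro m
    rw [← Real.sin_sub]
    congr 1
    push_cast
    ring
  have e2 : ∀ m : ℕ, Real.sin (((m + 2 : ℕ) : ℝ) * θ) =
      Real.sin (((m + 1 : ℕ) : ℝ) * θ) * Real.cos θ
        + Real.cos (((m + 1 : ℕ) : ℝ) * θ) * Real.sin θ := by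
    intro m
    rw [← Real.sin_add]
    congr 1
    push_cast
    ring
  constructor
  · intro j hj
    rw [hsum, hc, hv]
    simp only [if_pos hj, if_neg hj.ne]
    rw [e0 j, e2 j]
    ring
  · intro j hj
    have hcos : Real.cos ((((j : ℕ) + 1 : ℕ) : ℝ) * θ) = 0 := by
      rw [hj, Real.cos_eq_zero_iff]
      refine ⟨l, ?_⟩
      rw [hθ]
      push_cast
      field_simp
      ring
    rw [hsum, hc, hv]
    simp only [if_pos hj, if_neg hj.not_lt]
    rw [e0 j, hcos]
    ring
end

section
/- Generalized eigenvalue identity (paper's Lemma on the eigenpairs of A_{h_t}): let A ∈ ℝ^{N×N} be defined by A[j,i] = (1/2) Σ_{k=0}^∞ (π/2 + kπ) A_k^i A_k^j (the series converges absolutely), and let M ∈ ℝ^{N×N} be the tridiagonal matrix with M[j,j] = 2h/3 for 1 ≤ j ≤ N−1, M[N,N] = h/3, M[j,j+1] = M[j+1,j] = h/6. For 0 ≤ ℓ ≤ N−1 let v_ℓ ∈ ℝ^N have components v_{ℓ,i} = sin((π/2 + ℓπ) i / N) and set λ_ℓ = (3π/(2T)) · (sin⁴ x_ℓ / x_ℓ⁴)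 · (1/(2 + cos 2x_ℓ)) · Σ_{μ=0}^∞ [ (2ℓ+1)⁴/(4μN + 2ℓ + 1)³ + (2ℓ+1)⁴/(4μN + 4N − 1 − 2ℓ)³ ], where x_ℓ = (π/2 + ℓπ)/(2N). Then A v_ℓ = λ_ℓ M v_ℓ for every ℓ = 0,…,N−1. -/
open Real

/-- The Galerkin matrix `A[j,i] = (1/2) Σ_{k=0}^∞ (π/2 + kπ) A_k^i A_k^j` of the modified
Hilbert transformation (indices `j, i : Fin N` represent the nodes `j+1, i+1 ∈ {1,…,N}`). -/
noncomputable def hilbMat (N : ℕ) (T : ℝ) : Matrix (Fin N) (Fin N) ℝ :=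
  fun j i => (1 / 2) * ∑' k : ℕ,
    (π / 2 + k * π) * fourierCoef N T k ((i : ℕ) + 1) * fourierCoef N T k ((j : ℕ) + 1)

/-- The eigenvalue `λ_ℓ = (3π/(2T)) · (sin⁴ x_ℓ / x_ℓ⁴) · (1/(2 + cos 2x_ℓ)) ·
Σ_{μ=0}^∞ [ (2ℓ+1)⁴/(4μN + 2ℓ + 1)³ + (2ℓ+1)⁴/(4μN + 4N − 1 − 2ℓ)³ ]`, where
`x_ℓ = (π/2 + ℓπ)/(2N)`. -/
noncomputable def eigVal (N : ℕ) (T : ℝ) (l : ℕ) : ℝ :=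
  (3 * π / (2 * T)) *
    (Real.sin ((π / 2 + l * π) / (2 * N)) ^ 4 / ((π / 2 + l * π) / (2 * N)) ^ 4) *
    (1 / (2 + Real.cos (2 * ((π / 2 + l * π) / (2 * N))))) *
    ∑' μ : ℕ,
      ((2 * l + 1 : ℝ) ^ 4 / (4 * μ * N + 2 * l + 1 : ℝ) ^ 3 +
        (2 * l + 1 : ℝ) ^ 4 / ((4 * μ * N : ℝ) + 4 * N - 1 - 2 * l) ^ 3)

/-- Integral of an affine function times a sine on a subinterval. -/
lemma aux_lin_int (f : ℝ → ℝ) (a b w q c : ℝ) (hab : a ≤ b) (hw : w ≠ 0)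
    (hf : ∀ t ∈ Set.Icc a b, f t = q * (t - c)) :
    IntervalIntegrable (fun t => f t * Real.sin (w * t)) MeasureTheory.volume a b ∧
    ∫ t in a..b, f t * Real.sin (w * t) =
      (-(q * (b - c)) * Real.cos (w * b) / w + q * Real.sin (w * b) / w ^ 2) -
      (-(q * (a - c)) * Real.cos (w * a) / w + q * Real.sin (w * a) / w ^ 2) := by
  have hcongr : Set.EqOn (fun t => q * (t - c) * Real.sin (w * t))
      (fun t => f t * Real.sin (w * t)) (Set.uIcc a b) := by
    intro t ht
    rw [Set.uIcc_of_le hab] at ht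
    simp only [hf t ht]
  have hint : IntervalIntegrable (fun t => q * (t - c) * Real.sin (w * t))
      MeasureTheory.volume a b := by
    apply Continuous.intervalIntegrable
    fun_prop
  refine ⟨IntervalIntegrable.congr (hcongr.mono Set.uIoc_subset_uIcc) hint, ?_⟩
  rw [← intervalIntegral.integral_congr hcongr]
  refine intervalIntegral.integral_eq_sub_of_hasDerivAt
    (f := fun t => -(q * (t - c)) * Real.cos (w * t) / w + q * Real.sin (w * t) / w ^ 2)
    (fun t _ => ?_) hint
  have h1 : HasDerivAt (fun t : ℝ => w * t) w t := by
    simpa using (hasDerivAt_id t).const_mul w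
  have h2 : HasDerivAt (fun t : ℝ => -(q * (t - c))) (-(q * 1)) t :=
    (((hasDerivAt_id t).sub_const c).const_mul q).neg
  have h3 := ((h2.mul h1.cos).div_const w).add ((h1.sin.const_mul q).div_const (w ^ 2))
  refine h3.congr_deriv ?_
  field_simp
  ring

/-- half weight at the last node -/
noncomputable def auxC (N j : ℕ) : ℝ := if j = N then 1 / 2 else 1

lemma aux_coef (N : ℕ) (T : ℝ) (hT : 0 < T) (k j : ℕ) (hj : j + 1 ≤ N) :
    fourierCoef N T k (j + 1) = (2 / N) * auxC N (j + 1) *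
      (Real.sin ((π / 2 + k * π) / (2 * N)) ^ 2 / ((π / 2 + k * π) / (2 * N)) ^ 2) *
      Real.sin ((π / 2 + k * π) * ((j : ℝ) + 1) / N) := by
  have hN0 : (0 : ℝ) < N := by
    have : 0 < N := by omega
    exact_mod_cast this
  have hkpos : 0 < π / 2 + k * π := by positivity
  have hsa : Real.cos (π / 2 + k * π) = 0 := by
    rw [Real.cos_eq_zero_iff]
    exact ⟨k, by push_cast; ring⟩
  set a := π / 2 + k * π with ha
  obtain ⟨h, hh⟩ : ∃ h, h = T / N := ⟨_, rfl⟩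
  have hhpos : 0 < h := by rw [hh]; positivity
  have hTh : T = N * h := by rw [hh]; field_simp
  obtain ⟨x, hx⟩ : ∃ x, x = a / (2 * N) := ⟨_, rfl⟩
  have hxpos : 0 < x := by rw [hx]; positivity
  have hax : a = 2 * N * x := by rw [hx]; field_simp
  obtain ⟨w, hw⟩ : ∃ w, w = a / T := ⟨_, rfl⟩
  have hwpos : 0 < w := by rw [hw]; positivity
  have hwh : w * h = 2 * x := by rw [hw, hTh, hax]; field_simp
  have hwx : w = 2 * x / h := by rw [← hwh]; field_simp
  have hj0 : (0 : ℝ) ≤ j := Nat.cast_nonneg j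
  have hjN : (j : ℝ) + 1 ≤ N := by exact_mod_cast hj
  unfold fourierCoef
  have hfun : (fun t => hatFn N T (j + 1) t * Real.sin (a * t / T)) =
      fun t => hatFn N T (j + 1) t * Real.sin (w * t) := by
    funext t
    rw [hw]; congr 2; ring
  rw [hfun, ← hx, show a * ((j : ℝ) + 1) / N = 2 * x * (j + 1) by rw [hax]; field_simp]
  -- zero piece on the left
  have A1 := aux_lin_int (hatFn N T (j + 1)) 0 (j * h) w 0 0 (by positivity) hwpos.ne' (by
    intro t ht
    have h2 := ht.2
    have e : ((j : ℝ) + 1) * h - t ≥ h := by nlinarith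
    have e1 : 1 ≤ (((j : ℝ) + 1) * h - t) / h := by rw [le_div_iff₀ hhpos]; linarith
    unfold hatFn
    rw [← hh]
    split_ifs with hc
    · have hc' : (N : ℝ) = j + 1 := by exact_mod_cast hc.symm
      rw [hc', max_eq_left (by linarith)]; ring
    · push_cast
      rw [abs_of_nonpos (by linarith), max_eq_left]
      · ring
      · rw [neg_sub]; linarith)
  have A2 := aux_lin_int (hatFn N T (j + 1)) (j * h) ((j + 1) * h) w (1 / h) (j * h)
    (by nlinarith) hwpos.ne' (by
    intro t ht
    have h1 := ht.1
    have h2 := ht.2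
    have e1 : (((j : ℝ) + 1) * h - t) / h ≤ 1 := by rw [div_le_iff₀ hhpos]; linarith
    unfold hatFn
    rw [← hh]
    split_ifs with hc
    · have hc' : (N : ℝ) = j + 1 := by exact_mod_cast hc.symm
      rw [hc', max_eq_right (by linarith)]; field_simp; ring
    · push_cast
      rw [abs_of_nonpos (by linarith), max_eq_right]
      · field_simp; ring
      · rw [neg_sub]; linarith)
  by_cases hc : j + 1 = N
  · have hc' : (j : ℝ) + 1 = N := by exact_mod_cast hc
    rw [show T = ((j : ℝ) + 1) * h by rw [hc']; exact hTh]
    rw [show T = ((j : ℝ) + 1) * h by rw [hc']; exact hTh] at A1 A2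
    rw [← intervalIntegral.integral_add_adjacent_intervals A1.1 A2.1, A1.2, A2.2]
    have t1 : w * ((j + 1) * h) = a := by rw [hc', ← hTh, hw]; field_simp
    have t2 : w * (j * h) = a - 2 * x := by rw [← t1, ← hwh]; ring
    have t3 : 2 * x * ((j : ℝ) + 1) = a := by rw [← t1, ← hwh]; ring
    rw [t1, t2, t3, Real.sin_sub, hsa, hwx]
    have : auxC N (j + 1) = 1 / 2 := by simp [auxC, hc]
    rw [this, Real.cos_two_mul, Real.cos_sq', ← hc']
    field_simp
    ring
  · have hc2 : j + 2 ≤ N := by omega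
    have hc' : (j : ℝ) + 2 ≤ N := by exact_mod_cast hc2
    have A3 := aux_lin_int (hatFn N T (j + 1)) ((j + 1) * h) ((j + 2) * h) w (-1 / h)
      ((j + 2) * h) (by nlinarith) hwpos.ne' (by
      intro t ht
      have h1 := ht.1
      have h2 := ht.2
      have e1 : (t - ((j : ℝ) + 1) * h) / h ≤ 1 := by rw [div_le_iff₀ hhpos]; linarith
      unfold hatFn
      rw [← hh, if_neg hc]
      push_cast
      rw [abs_of_nonneg (by linarith), max_eq_right]
      · field_simp; ring
      · linarith)
    have A4 := aux_lin_int (hatFn N T (j + 1)) ((j + 2) * h) T w 0 0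
      (by rw [hTh]; nlinarith) hwpos.ne' (by
      intro t ht
      have h1 := ht.1
      have e1 : 1 ≤ (t - ((j : ℝ) + 1) * h) / h := by rw [le_div_iff₀ hhpos]; linarith
      unfold hatFn
      rw [← hh, if_neg hc]
      push_cast
      rw [abs_of_nonneg (by linarith), max_eq_left]
      · ring
      · linarith)
    rw [← intervalIntegral.integral_add_adjacent_intervals (A1.1.trans (A2.1.trans A3.1)) A4.1,
      ← intervalIntegral.integral_add_adjacent_intervals A1.1 (A2.1.trans A3.1),
      ← intervalIntegral.integral_add_adjacent_intervals A2.1 A3.1, A1.2, A2.2, A3.2, A4.2]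
    have : auxC N (j + 1) = 1 := by simp [auxC, hc]
    obtain ⟨y, hy⟩ : ∃ y, y = 2 * x * ((j : ℝ) + 1) := ⟨_, rfl⟩
    have t1 : w * ((j + 1) * h) = y := by rw [hy, ← hwh]; ring
    have t2 : w * (j * h) = y - 2 * x := by rw [hy, ← hwh]; ring
    have t3 : w * ((j + 2) * h) = y + 2 * x := by rw [hy, ← hwh]; ring
    rw [t1, t2, t3, ← hy, Real.sin_sub, Real.sin_add, hwx, this, Real.cos_two_mul,
      Real.cos_sq', hTh]
    field_simp
    ring

lemma aux_tele (θ : ℝ) (n : ℕ) :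
    2 * Real.sin (θ / 2) * ∑ i ∈ Finset.range n, Real.cos (((i : ℝ) + 1) * θ) =
      Real.sin (n * θ + θ / 2) - Real.sin (θ / 2) := by
  induction n with
  | zero => simp
  | succ n ih =>
    rw [Finset.sum_range_succ, mul_add, ih]
    push_cast
    have e1 : ((n : ℝ) + 1) * θ + θ / 2 = (n * θ + θ) + θ / 2 := by ring
    have e2 : (n : ℝ) * θ + θ / 2 = (n * θ + θ) - θ / 2 := by ring
    have e3 : ((n : ℝ) + 1) * θ = n * θ + θ := by ring
    rw [e1, e2, e3, Real.sin_add _ (θ / 2), Real.sin_sub _ (θ / 2)]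
    ring

/-- half-weighted cosine sum vanishes -/
lemma aux_cos (N : ℕ) (hN : 1 ≤ N) (m : ℤ) (hm : ¬ (2 * N : ℤ) ∣ m) :
    1 / 2 + ∑ i ∈ Finset.range N, auxC N (i + 1) * Real.cos (((i : ℝ) + 1) * (m * π / N)) = 0 := by
  have hN0 : (0 : ℝ) < N := by exact_mod_cast hN
  obtain ⟨θ, hθ⟩ : ∃ θ, θ = (m : ℝ) * π / N := ⟨_, rfl⟩
  have hs : Real.sin (θ / 2) ≠ 0 := by
    intro h0
    rw [Real.sin_eq_zero_iff] at h0
    obtain ⟨n, hn⟩ := h0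
    apply hm
    refine ⟨n, ?_⟩
    rw [hθ] at hn
    have hp := Real.pi_pos
    have : (m : ℝ) = 2 * N * n := by
      field_simp at hn
      linarith
    exact_mod_cast this
  rw [← hθ]
  obtain ⟨n, rfl⟩ : ∃ n, N = n + 1 := ⟨N - 1, by omega⟩
  have hNθ : Real.sin ((n + 1) * θ) = 0 := by
    rw [Real.sin_eq_zero_iff]
    refine ⟨m, ?_⟩
    rw [hθ]; push_cast; field_simp
  have hsum : ∑ i ∈ Finset.range n, auxC (n + 1) (i + 1) * Real.cos (((i : ℝ) + 1) * θ) =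
      ∑ i ∈ Finset.range n, Real.cos (((i : ℝ) + 1) * θ) := by
    apply Finset.sum_congr rfl
    intro i hi
    have := Finset.mem_range.1 hi
    rw [auxC, if_neg (by omega), one_mul]
  rw [Finset.sum_range_succ, hsum]
  have ht := aux_tele θ n
  have hc : auxC (n + 1) (n + 1) = 1 / 2 := by simp [auxC]
  rw [hc]
  have e2 : (n : ℝ) * θ + θ / 2 = (n + 1) * θ - θ / 2 := by ring
  rw [e2, Real.sin_sub, hNθ] at ht
  have : 2 * Real.sin (θ / 2) * (1 / 2 + (∑ i ∈ Finset.range n, Real.cos (((i : ℝ) + 1) * θ) +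
      1 / 2 * Real.cos (((n : ℝ) + 1) * θ))) = 0 := by
    linear_combination ht
  rcases mul_eq_zero.1 this with h | h
  · exact absurd (by linarith) hs
  · exact h

lemma aux_cos0 (N : ℕ) (hN : 1 ≤ N) :
    1 / 2 + ∑ i ∈ Finset.range N, auxC N (i + 1) = N := by
  obtain ⟨n, rfl⟩ : ∃ n, N = n + 1 := ⟨N - 1, by omega⟩
  have hsum : ∑ i ∈ Finset.range n, auxC (n + 1) (i + 1) = ∑ i ∈ Finset.range n, (1 : ℝ) := by
    apply Finset.sum_congr rfl
    intro i hi
    have := Finset.mem_range.1 hi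
    rw [auxC, if_neg (by omega)]
  rw [Finset.sum_range_succ, hsum]
  simp [auxC]
  ring

lemma aux_D (N : ℕ) (k l : ℕ) :
    ∑ i ∈ Finset.range N, auxC N (i + 1) * Real.sin ((π / 2 + k * π) * ((i : ℝ) + 1) / N) *
        Real.sin ((π / 2 + l * π) * ((i : ℝ) + 1) / N) =
      1 / 2 * ((1 / 2 + ∑ i ∈ Finset.range N, auxC N (i + 1) *
        Real.cos (((i : ℝ) + 1) * (((k - l : ℤ) : ℝ) * π / N))) -
       (1 / 2 + ∑ i ∈ Finset.range N, auxC N (i + 1) *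
        Real.cos (((i : ℝ) + 1) * (((k + l + 1 : ℤ) : ℝ) * π / N)))) := by
  rw [add_sub_add_left_eq_sub, ← Finset.sum_sub_distrib, Finset.mul_sum]
  apply Finset.sum_congr rfl
  intro i _
  have e1 : ((i : ℝ) + 1) * (((k - l : ℤ) : ℝ) * π / N) =
      (π / 2 + k * π) * ((i : ℝ) + 1) / N - (π / 2 + l * π) * ((i : ℝ) + 1) / N := by
    push_cast; ring
  have e2 : ((i : ℝ) + 1) * (((k + l + 1 : ℤ) : ℝ) * π / N) =
      (π / 2 + k * π) * ((i : ℝ) + 1) / N + (π / 2 + l * π) * ((i : ℝ) + 1) / N := by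
    push_cast; ring
  rw [e1, e2, Real.cos_sub, Real.cos_add]
  ring

lemma aux_D_zero (N : ℕ) (hN : 1 ≤ N) (k l : ℕ)
    (h1 : ¬ (2 * N : ℤ) ∣ k - l) (h2 : ¬ (2 * N : ℤ) ∣ k + l + 1) :
    ∑ i ∈ Finset.range N, auxC N (i + 1) * Real.sin ((π / 2 + k * π) * ((i : ℝ) + 1) / N) *
        Real.sin ((π / 2 + l * π) * ((i : ℝ) + 1) / N) = 0 := by
  rw [aux_D, aux_cos N hN _ h1, aux_cos N hN _ h2]; ring

lemma aux_D_self (N : ℕ) (hN : 1 ≤ N) (l : ℕ) :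
    ∑ i ∈ Finset.range N, auxC N (i + 1) * Real.sin ((π / 2 + l * π) * ((i : ℝ) + 1) / N) *
        Real.sin ((π / 2 + l * π) * ((i : ℝ) + 1) / N) = N / 2 := by
  have h2 : ¬ (2 * N : ℤ) ∣ l + l + 1 := by
    rintro ⟨c, hc⟩
    have : (2 : ℤ) ∣ l + l + 1 := ⟨N * c, by rw [hc]; ring⟩
    omega
  rw [aux_D, aux_cos N hN _ h2]
  simp only [sub_self, Int.cast_zero, zero_mul, zero_div, mul_zero, Real.cos_zero, mul_one]
  rw [aux_cos0 N hN]; ring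

lemma aux_mass (N : ℕ) (x h : ℝ) (hx : Real.cos (2 * x * N) = 0) (j : Fin N) :
    ∑ i : Fin N, massMat N h j i * Real.sin (2 * x * (((i : ℕ) : ℝ) + 1)) =
      auxC N ((j : ℕ) + 1) * (h / 3) * (2 + Real.cos (2 * x)) *
        Real.sin (2 * x * (((j : ℕ) : ℝ) + 1)) := by
  obtain ⟨j, hj⟩ := j
  have key : ∀ i : Fin N, massMat N h ⟨j, hj⟩ i * Real.sin (2 * x * (((i : ℕ) : ℝ) + 1)) =
     (fun i : ℕ => (if j = i then (if j + 1 = N then h / 3 else 2 * h / 3) *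
        Real.sin (2 * x * ((i : ℝ) + 1)) else 0) +
      (if j + 1 = i then h / 6 * Real.sin (2 * x * ((i : ℝ) + 1)) else 0) +
      (if j = i + 1 then h / 6 * Real.sin (2 * x * ((i : ℝ) + 1)) else 0)) (i : ℕ) := by
    rintro ⟨i, hi⟩
    simp only [massMat, Fin.mk.injEq]
    by_cases c1 : j = i
    · have : j + 1 ≠ i := by omega
      have : j ≠ i + 1 := by omega
      simp [*]
    · by_cases c2 : j + 1 = i
      · have : j ≠ i + 1 := by omega
        simp [*]
      · by_cases c3 : j = i + 1
        · have c4 : ¬ (i + 1 + 1 = i) := by omega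
          subst c3
          simp [c4]
        · have : ¬ (i + 1 = j) := by omega
          simp [*]
  rw [Finset.sum_congr rfl (fun i _ => key i), Fin.sum_univ_eq_sum_range
    (fun i : ℕ => (if j = i then (if j + 1 = N then h / 3 else 2 * h / 3) *
        Real.sin (2 * x * ((i : ℝ) + 1)) else 0) +
      (if j + 1 = i then h / 6 * Real.sin (2 * x * ((i : ℝ) + 1)) else 0) +
      (if j = i + 1 then h / 6 * Real.sin (2 * x * ((i : ℝ) + 1)) else 0)) N,
    Finset.sum_add_distrib, Finset.sum_add_distrib, Finset.sum_ite_eq, Finset.sum_ite_eq]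
  have h3 : ∑ i ∈ Finset.range N,
      (if j = i + 1 then h / 6 * Real.sin (2 * x * ((i : ℝ) + 1)) else 0) =
      h / 6 * Real.sin (2 * x * j) := by
    rcases j with _ | j
    · simp
    · simp only [Nat.add_right_cancel_iff, Finset.sum_ite_eq, Finset.mem_range]
      rw [if_pos (by omega)]
      push_cast; rfl
  rw [h3, if_pos (Finset.mem_range.2 hj)]
  simp only [Finset.mem_range]
  obtain ⟨y, hy⟩ : ∃ y, y = 2 * x * ((j : ℝ) + 1) := ⟨_, rfl⟩
  have e1 : 2 * x * (j : ℝ) = y - 2 * x := by rw [hy]; ring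
  have e2 : 2 * x * ((j : ℝ) + 1 + 1) = y + 2 * x := by rw [hy]; ring
  by_cases hc : j + 1 = N
  · have hc' : (j : ℝ) + 1 = N := by exact_mod_cast hc
    rw [if_pos hc, if_neg (by omega), e1, ← hy, Real.sin_sub]
    rw [← hc', ← hy] at hx
    rw [hx, auxC, if_pos hc]
    ring
  · rw [if_neg hc, if_pos (by omega)]
    push_cast
    rw [e1, e2, ← hy, Real.sin_sub, Real.sin_add, auxC, if_neg hc]
    ring

lemma aux_summable (N : ℕ) (hN : 1 ≤ N) (T : ℝ) (hT : 0 < T) (i j : Fin N) :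
    Summable (fun k : ℕ =>
        (π / 2 + k * π) * fourierCoef N T k ((i : ℕ) + 1) * fourierCoef N T k ((j : ℕ) + 1)) := by
  have hN0 : (0 : ℝ) < N := by exact_mod_cast hN
  have hs : Summable (fun k : ℕ => (64 * (N : ℝ) ^ 2) * (1 / ((k + 1 : ℕ) : ℝ) ^ 3)) :=
    ((summable_nat_add_iff 1).2 (Real.summable_one_div_nat_pow.2 (by norm_num))).mul_left _
  refine Summable.of_norm_bounded hs (fun k => ?_)
  rw [aux_coef N T hT k i (by omega), aux_coef N T hT k j (by omega)]
  have hap : 0 < π / 2 + k * π := by positivity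
  have ha1 : ((k + 1 : ℕ) : ℝ) ≤ π / 2 + k * π := by
    push_cast
    have h3 := Real.pi_gt_three
    have hk : (0 : ℝ) ≤ k := Nat.cast_nonneg k
    nlinarith
  set a := π / 2 + k * π
  have hC : ∀ m, |auxC N m| ≤ 1 := by
    intro m; unfold auxC; split_ifs <;> norm_num [abs_of_pos]
  have hS : ∀ y, |Real.sin y| ≤ 1 := Real.abs_sin_le_one
  have e : a * ((2 / N) * auxC N (i + 1) *
      (Real.sin (a / (2 * N)) ^ 2 / (a / (2 * N)) ^ 2) * Real.sin (a * ((i : ℝ) + 1) / N)) *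
      ((2 / N) * auxC N (j + 1) *
      (Real.sin (a / (2 * N)) ^ 2 / (a / (2 * N)) ^ 2) * Real.sin (a * ((j : ℝ) + 1) / N)) =
      (64 * (N : ℝ) ^ 2 * (1 / a ^ 3)) * (auxC N (i + 1) * auxC N (j + 1) *
        Real.sin (a / (2 * N)) ^ 4 * Real.sin (a * ((i : ℝ) + 1) / N) *
        Real.sin (a * ((j : ℝ) + 1) / N)) := by
    field_simp
    ring
  rw [e, norm_mul, Real.norm_of_nonneg (by positivity), Real.norm_eq_abs]
  have hb : |auxC N (i + 1) * auxC N (j + 1) *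
        Real.sin (a / (2 * N)) ^ 4 * Real.sin (a * ((i : ℝ) + 1) / N) *
        Real.sin (a * ((j : ℝ) + 1) / N)| ≤ 1 := by
    simp only [abs_mul, abs_pow]
    have h4 : |Real.sin (a / (2 * N))| ^ 4 ≤ 1 := pow_le_one₀ (abs_nonneg _) (hS _)
    exact mul_le_one₀ (mul_le_one₀ (mul_le_one₀ (mul_le_one₀ (hC _) (abs_nonneg _) (hC _))
      (by positivity) h4) (abs_nonneg _) (hS _)) (abs_nonneg _) (hS _)
  have hk1 : (0 : ℝ) < ((k + 1 : ℕ) : ℝ) := by positivity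
  calc (64 * (N : ℝ) ^ 2 * (1 / a ^ 3)) * _ ≤ (64 * (N : ℝ) ^ 2 * (1 / a ^ 3)) * 1 :=
        mul_le_mul_of_nonneg_left hb (by positivity)
    _ ≤ _ := by
      rw [mul_one]
      gcongr

lemma aux_split (N l : ℕ) (hl : l < N) (g : ℕ → ℝ) (hg : Summable g)
    (hz : ∀ k : ℕ, ¬ (2 * N : ℤ) ∣ k - l → ¬ (2 * N : ℤ) ∣ k + l + 1 → g k = 0) :
    ∑' k, g k = ∑' μ : ℕ, (g (2 * N * μ + l) + g (2 * N * μ + (2 * N - 1 - l))) := by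
  have hm : ∀ (μ ν r s : ℕ), r < 2 * N → s < 2 * N → 2 * N * μ + r = 2 * N * ν + s →
      μ = ν ∧ r = s := by
    intro μ ν r s hr hs h
    have h1 := congrArg (· % (2 * N)) h
    simp only [Nat.mul_add_mod, Nat.mod_eq_of_lt hr, Nat.mod_eq_of_lt hs] at h1
    refine ⟨?_, h1⟩
    subst h1
    exact Nat.eq_of_mul_eq_mul_left (by omega : 0 < 2 * N) (by omega)
  have i1 : Function.Injective (fun μ : ℕ => 2 * N * μ + l) := fun μ ν h =>
    (hm μ ν l l (by omega) (by omega) h).1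
  have i2 : Function.Injective (fun μ : ℕ => 2 * N * μ + (2 * N - 1 - l)) := fun μ ν h =>
    (hm μ ν _ _ (by omega) (by omega) h).1
  have i3 : Function.Injective (Sum.elim (fun μ : ℕ => 2 * N * μ + l)
      (fun μ : ℕ => 2 * N * μ + (2 * N - 1 - l))) :=
    i1.sumElim i2 (fun μ ν h => by
      have := (hm μ ν _ _ (by omega) (by omega) h).2
      omega)
  have s1 := hg.comp_injective i1
  have s2 := hg.comp_injective i2
  have key : HasSum g (∑' μ, (g ∘ fun μ : ℕ => 2 * N * μ + l) μ +
      ∑' μ, (g ∘ fun μ : ℕ => 2 * N * μ + (2 * N - 1 - l)) μ) := by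
    rw [← i3.hasSum_iff]
    · exact HasSum.sum s1.hasSum s2.hasSum
    · intro k hk
      apply hz
      · rintro ⟨c, hc⟩
        apply hk
        have hc0 : 0 ≤ c := by
          by_contra hneg
          have : c ≤ -1 := by omega
          nlinarith
        lift c to ℕ using hc0
        refine ⟨Sum.inl c, ?_⟩
        simp only [Sum.elim_inl]
        zify; linarith
      · rintro ⟨c, hc⟩
        apply hk
        have hc0 : 1 ≤ c := by
          by_contra hneg
          have : c ≤ 0 := by omega
          nlinarith
        obtain ⟨d, rfl⟩ : ∃ d, c = d + 1 := ⟨c - 1, by ring⟩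
        have hd : 0 ≤ d := by omega
        lift d to ℕ using hd
        refine ⟨Sum.inr d, ?_⟩
        simp only [Sum.elim_inr]
        have : 2 * N * (d + 1) = k + l + 1 := by zify; linarith
        rw [mul_add] at this
        omega
  rw [key.tsum_eq, ← s1.tsum_add s2]
  rfl

/-- The `k`-th summand of `(2 A v_ℓ)_j`. -/
noncomputable def auxG (N l j k : ℕ) : ℝ :=
  (4 / (N : ℝ) ^ 2) * auxC N (j + 1) * (π / 2 + k * π) *
    (Real.sin ((π / 2 + k * π) / (2 * N)) ^ 4 / ((π / 2 + k * π) / (2 * N)) ^ 4) *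
    Real.sin ((π / 2 + k * π) * ((j : ℝ) + 1) / N) *
    ∑ i ∈ Finset.range N, auxC N (i + 1) * Real.sin ((π / 2 + k * π) * ((i : ℝ) + 1) / N) *
        Real.sin ((π / 2 + l * π) * ((i : ℝ) + 1) / N)

lemma aux_G_pos (N : ℕ) (hN : 1 ≤ N) (l j μ : ℕ) :
    auxG N l j (2 * N * μ + l) = (64 * (N : ℝ) ^ 3 / (π / 2) ^ 3 / 2) * auxC N (j + 1) *
      Real.sin ((π / 2 + l * π) / (2 * N)) ^ 4 *
      Real.sin ((π / 2 + l * π) * ((j : ℝ) + 1) / N) * (1 / (4 * μ * N + 2 * l + 1 : ℝ) ^ 3) := by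
  have hN0 : (0 : ℝ) < N := by exact_mod_cast hN
  have hp := Real.pi_pos
  have ea : π / 2 + ((2 * N * μ + l : ℕ) : ℝ) * π = (π / 2 + l * π) + 2 * N * μ * π := by
    push_cast; ring
  have es : ∀ i : ℕ, Real.sin ((π / 2 + ((2 * N * μ + l : ℕ) : ℝ) * π) * ((i : ℝ) + 1) / N) =
      Real.sin ((π / 2 + l * π) * ((i : ℝ) + 1) / N) := by
    intro i
    rw [ea, ← Real.sin_add_nat_mul_two_pi ((π / 2 + l * π) * ((i : ℝ) + 1) / N) (μ * (i + 1))]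
    congr 1
    push_cast; field_simp
  have e4 : Real.sin ((π / 2 + ((2 * N * μ + l : ℕ) : ℝ) * π) / (2 * N)) ^ 4 =
      Real.sin ((π / 2 + l * π) / (2 * N)) ^ 4 := by
    rw [ea, show ((π / 2 + l * π) + 2 * N * μ * π) / (2 * N) =
      (π / 2 + l * π) / (2 * N) + μ * π by field_simp, Real.sin_add_nat_mul_pi, mul_pow,
      ← pow_mul, mul_comm μ 4, pow_mul]
    norm_num
  unfold auxG
  simp only [es]
  rw [e4, aux_D_self N hN l]
  have hb : (0 : ℝ) < 4 * μ * N + 2 * l + 1 := by positivity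
  rw [show π / 2 + ((2 * N * μ + l : ℕ) : ℝ) * π = π / 2 * (4 * μ * N + 2 * l + 1) by
    push_cast; ring]
  field_simp
  ring

lemma aux_G_neg (N : ℕ) (l j μ : ℕ) (hl : l < N) :
    auxG N l j (2 * N * μ + (2 * N - 1 - l)) =
      (64 * (N : ℝ) ^ 3 / (π / 2) ^ 3 / 2) * auxC N (j + 1) *
      Real.sin ((π / 2 + l * π) / (2 * N)) ^ 4 *
      Real.sin ((π / 2 + l * π) * ((j : ℝ) + 1) / N) *
        (1 / ((4 * μ * N : ℝ) + 4 * N - 1 - 2 * l) ^ 3) := by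
  have hN : 1 ≤ N := by omega
  have hN0 : (0 : ℝ) < N := by exact_mod_cast hN
  have hl' : (l : ℝ) + 1 ≤ N := by exact_mod_cast hl
  have hp := Real.pi_pos
  have ek : ((2 * N * μ + (2 * N - 1 - l) : ℕ) : ℝ) = 2 * N * μ + 2 * N - 1 - l := by
    have : 2 * N * μ + (2 * N - 1 - l) + 1 + l = 2 * N * μ + 2 * N := by omega
    have h2 : ((2 * N * μ + (2 * N - 1 - l) : ℕ) : ℝ) + 1 + l = 2 * N * μ + 2 * N := by
      exact_mod_cast this
    linarith
  have ea : π / 2 + ((2 * N * μ + (2 * N - 1 - l) : ℕ) : ℝ) * π =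
      2 * N * (μ + 1) * π - (π / 2 + l * π) := by
    rw [ek]; ring
  have es : ∀ i : ℕ,
      Real.sin ((π / 2 + ((2 * N * μ + (2 * N - 1 - l) : ℕ) : ℝ) * π) * ((i : ℝ) + 1) / N) =
      - Real.sin ((π / 2 + l * π) * ((i : ℝ) + 1) / N) := by
    intro i
    rw [ea, ← Real.sin_nat_mul_two_pi_sub _ ((μ + 1) * (i + 1))]
    congr 1
    push_cast; field_simp
  have e4 : Real.sin ((π / 2 + ((2 * N * μ + (2 * N - 1 - l) : ℕ) : ℝ) * π) / (2 * N)) ^ 4 =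
      Real.sin ((π / 2 + l * π) / (2 * N)) ^ 4 := by
    rw [ea, show (2 * N * (μ + 1) * π - (π / 2 + l * π)) / (2 * N) =
      ((μ + 1 : ℕ) : ℝ) * π - (π / 2 + l * π) / (2 * N) by push_cast; field_simp,
      Real.sin_nat_mul_pi_sub, neg_pow, mul_pow, ← pow_mul, mul_comm (μ + 1) 4, pow_mul]
    norm_num
  unfold auxG
  simp only [es, mul_neg, neg_mul, Finset.sum_neg_distrib, neg_neg]
  rw [e4, aux_D_self N hN l]
  have hb : (0 : ℝ) < 4 * μ * N + 4 * N - 1 - 2 * l := by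
    have : (0 : ℝ) ≤ 4 * μ * N := by positivity
    linarith
  rw [show π / 2 + ((2 * N * μ + (2 * N - 1 - l) : ℕ) : ℝ) * π =
    π / 2 * (4 * μ * N + 4 * N - 1 - 2 * l) by rw [ek]; ring]
  generalize (4 * μ * N + 4 * N - 1 - 2 * l : ℝ) = b at hb
  field_simp
  ring


/-- generalized eigenvalue identity: the series defining the entries of
`A` converge absolutely, and `A v_ℓ = λ_ℓ M v_ℓ` for every `ℓ = 0,…,N−1`, where
`h = T/N` is the temporal mesh size. -/
theorem stmt_16 (N : ℕ) (hN : 1 ≤ N) (T : ℝ) (hT : 0 < T) :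
    (∀ i j : Fin N, Summable (fun k : ℕ =>
        (π / 2 + k * π) * fourierCoef N T k ((i : ℕ) + 1) * fourierCoef N T k ((j : ℕ) + 1))) ∧
      ∀ l : ℕ, l ≤ N - 1 →
        (hilbMat N T).mulVec (sineVec N l) =
          eigVal N T l • (massMat N (T / N)).mulVec (sineVec N l) := by
  refine ⟨aux_summable N hN T hT, fun l hl => ?_⟩
  have hl' : l < N := by omega
  have hN0 : (0 : ℝ) < N := by exact_mod_cast hN
  have hp := Real.pi_pos
  funext j
  -- left-hand side
  have hG : ∀ k : ℕ, ∑ i : Fin N, (π / 2 + k * π) * fourierCoef N T k ((i : ℕ) + 1) *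
      fourierCoef N T k ((j : ℕ) + 1) * sineVec N l i = auxG N l j k := by
    intro k
    unfold auxG
    rw [← Fin.sum_univ_eq_sum_range (fun i : ℕ => auxC N (i + 1) *
      Real.sin ((π / 2 + k * π) * ((i : ℝ) + 1) / N) *
        Real.sin ((π / 2 + l * π) * ((i : ℝ) + 1) / N)) N, Finset.mul_sum]
    apply Finset.sum_congr rfl
    intro i _
    rw [aux_coef N T hT k i (by omega), aux_coef N T hT k j (by omega)]
    unfold sineVec
    have hx : 0 < (π / 2 + k * π) / (2 * N) := by positivity
    generalize (π / 2 + k * π) / (2 * N) = x at hx ⊢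
    generalize π / 2 + k * π = a
    field_simp
    ring
  have hS : ∀ i ∈ (Finset.univ : Finset (Fin N)), Summable (fun k : ℕ => (π / 2 + k * π) *
      fourierCoef N T k ((i : ℕ) + 1) * fourierCoef N T k ((j : ℕ) + 1) * sineVec N l i) :=
    fun i _ => (aux_summable N hN T hT i j).mul_right _
  have hSG : Summable (auxG N l j) := (summable_sum hS).congr (fun k => hG k)
  have hL : (hilbMat N T).mulVec (sineVec N l) j = 1 / 2 * ∑' k, auxG N l j k := by
    rw [← tsum_congr hG, Summable.tsum_finsetSum hS, Finset.mul_sum]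
    simp only [Matrix.mulVec, dotProduct, hilbMat]
    apply Finset.sum_congr rfl
    intro i _
    rw [tsum_mul_right]
    ring
  have hz : ∀ k : ℕ, ¬ (2 * N : ℤ) ∣ k - l → ¬ (2 * N : ℤ) ∣ k + l + 1 → auxG N l j k = 0 := by
    intro k h1 h2
    unfold auxG
    rw [aux_D_zero N hN k l h1 h2, mul_zero]
  rw [hL, aux_split N l hl' _ hSG hz]
  simp only [aux_G_pos N hN, aux_G_neg N l _ _ hl', ← mul_add]
  rw [tsum_mul_left]
  -- right-hand side
  have hcos : Real.cos (2 * ((π / 2 + l * π) / (2 * N)) * N) = 0 := by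
    rw [Real.cos_eq_zero_iff]
    exact ⟨l, by push_cast; field_simp; ring⟩
  have hM := aux_mass N ((π / 2 + l * π) / (2 * N)) (T / N) hcos j
  have hsv : ∀ i : ℕ, Real.sin (2 * ((π / 2 + l * π) / (2 * N)) * ((i : ℝ) + 1)) =
      Real.sin ((π / 2 + l * π) * ((i : ℝ) + 1) / N) := by
    intro i; congr 1; field_simp
  simp only [hsv] at hM
  have hR : (massMat N (T / N)).mulVec (sineVec N l) j = _ := hM
  rw [Pi.smul_apply, smul_eq_mul, hR]
  unfold eigVal
  have hE : (fun μ : ℕ => ((2 * l + 1 : ℝ) ^ 4 / (4 * μ * N + 2 * l + 1 : ℝ) ^ 3 +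
        (2 * l + 1 : ℝ) ^ 4 / ((4 * μ * N : ℝ) + 4 * N - 1 - 2 * l) ^ 3)) =
      fun μ : ℕ => (2 * l + 1 : ℝ) ^ 4 * (1 / (4 * μ * N + 2 * l + 1 : ℝ) ^ 3 +
        1 / ((4 * μ * N : ℝ) + 4 * N - 1 - 2 * l) ^ 3) := by
    funext μ; ring
  rw [hE, tsum_mul_left]
  generalize (∑' μ : ℕ, (1 / (4 * μ * N + 2 * l + 1 : ℝ) ^ 3 +
        1 / ((4 * μ * N : ℝ) + 4 * N - 1 - 2 * l) ^ 3)) = S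
  have hc2 : 0 < 2 + Real.cos (2 * ((π / 2 + l * π) / (2 * N))) := by
    have := Real.neg_one_le_cos (2 * ((π / 2 + l * π) / (2 * N)))
    linarith
  generalize Real.cos (2 * ((π / 2 + l * π) / (2 * N))) = c at hc2
  generalize Real.sin ((π / 2 + l * π) * (((j : ℕ) : ℝ) + 1) / N) = s
  generalize Real.sin ((π / 2 + l * π) / (2 * N)) = s'
  rw [show π / 2 + l * π = π / 2 * (2 * l + 1) by ring]
  have hb : (0 : ℝ) < 2 * l + 1 := by positivity
  generalize (2 * l + 1 : ℝ) = b at hb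
  field_simp
  norm_num
end
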